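/- Mordell's inequality for Hermite constants: For every n ≥ 3 one has γₙ^{n−2} ≤ γ_{n−1}^{n−1}, equivalently γₙ ≤ γ_{n−1}^{(n−1)/(n−2)}. -/

import Mathlib

open Matrix

/-- The Hermite constant `γₙ`: the supremum over all positive definite quadratic
forms `Q(x) = xᵀAx` on `ℝⁿ` of `min{Q(x) : x ∈ ℤⁿ, x ≠ 0} / det(A)^(1/n)`. -/
noncomputable def hermiteConstant (n : ℕ) : ℝ :=
  sSup { r : ℝ | ∃ A : Matrix (Fin n) (Fin n) ℝ, A.PosDef ∧
    r = sInf { q : ℝ | ∃ x : Fin n → ℤ, x ≠ 0 ∧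
          q = (fun i => (x i : ℝ)) ⬝ᵥ A.mulVec (fun i => (x i : ℝ)) } /
        A.det ^ ((1 : ℝ) / n) }

/-!
Let `h A = min A / det(A)^(1/n)`, where `min A` is the minimum of the form `A` on `ℤⁿ ∖ {0}`. For
a nonzero integer vector `y`, restrict `A` to the rank `n - 1` lattice of the integer vectors
orthogonal to `y`. The restricted form has minimum at least `min A`, and its determinant is
`det A * A⁻¹[y]` when `y` is primitive. Hence `(min A)^(n-1) ≤ γₙ₋₁^(n-1) * det A * min A⁻¹`, which
normalizes to `h A ^ (n-1) ≤ γₙ₋₁^(n-1) * h A⁻¹`. Bounding `h A⁻¹` by `γₙ` and taking the supremum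
over `A` gives `γₙ^(n-1) ≤ γₙ₋₁^(n-1) * γₙ`. Minkowski's convex body theorem ensures that the
suprema are finite.
-/

section ArithmeticMinimum

variable {ι κ : Type*} [Fintype ι]

/-- The value `A[x] = xᵀAx` of the quadratic form with matrix `A` at an integer vector `x`. -/
noncomputable def intValue (A : Matrix ι ι ℝ) (x : ι → ℤ) : ℝ :=
  (fun i => (x i : ℝ)) ⬝ᵥ A.mulVec (fun i => (x i : ℝ))

/-- The arithmetical minimum of the quadratic form with matrix `A`: the infimum of its values at
nonzero integer vectors. It is the junk value `0` when `ι` is empty. -/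
noncomputable def arithMin (A : Matrix ι ι ℝ) : ℝ :=
  sInf {q : ℝ | ∃ x : ι → ℤ, x ≠ 0 ∧ q = intValue A x}

lemma intValue_pos {A : Matrix ι ι ℝ} (hA : A.PosDef) {x : ι → ℤ} (hx : x ≠ 0) :
    0 < intValue A x := by
  have hx' : (fun i => (x i : ℝ)) ≠ 0 := fun h =>
    hx (funext fun i => Int.cast_eq_zero.1 (congrFun h i))
  simpa only [intValue, star_trivial] using hA.dotProduct_mulVec_pos hx'

lemma intValue_smul (A : Matrix ι ι ℝ) (c : ℤ) (x : ι → ℤ) :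
    intValue A (c • x) = (c : ℝ) ^ 2 * intValue A x := by
  have hcast : (fun i => ((c • x) i : ℝ)) = (c : ℝ) • fun i => (x i : ℝ) := by
    ext i; simp
  simp only [intValue, hcast, mulVec_smul, smul_dotProduct, dotProduct_smul, smul_eq_mul]
  ring

lemma intValue_le_intValue_smul {A : Matrix ι ι ℝ} (hA : A.PosDef) {c : ℤ} {x : ι → ℤ}
    (hcx : c • x ≠ 0) : intValue A x ≤ intValue A (c • x) := by
  have hc : (1 : ℝ) ≤ (c : ℝ) ^ 2 := by
    exact_mod_cast Int.one_le_abs (pow_ne_zero 2 (left_ne_zero_of_smul hcx)) |>.trans_eq (abs_sq c)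
  rw [intValue_smul]
  exact le_mul_of_one_le_left (intValue_pos hA (right_ne_zero_of_smul hcx)).le hc

lemma intValue_single [DecidableEq ι] (A : Matrix ι ι ℝ) (j : ι) :
    intValue A (Pi.single j 1) = A j j := by
  have hcast : (fun i => ((Pi.single j 1 : ι → ℤ) i : ℝ)) = Pi.single j 1 := by
    ext i; simp [Pi.single_apply]
  rw [intValue, hcast, mulVec_single_one, single_one_dotProduct, col_apply]

lemma arithMin_nonneg {A : Matrix ι ι ℝ} (hA : A.PosDef) : 0 ≤ arithMin A := by
  refine Real.sInf_nonneg ?_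
  rintro _ ⟨x, hx, rfl⟩
  exact (intValue_pos hA hx).le

lemma arithMin_le_intValue {A : Matrix ι ι ℝ} (hA : A.PosDef) {x : ι → ℤ} (hx : x ≠ 0) :
    arithMin A ≤ intValue A x := by
  refine csInf_le ⟨0, ?_⟩ ⟨x, hx, rfl⟩
  rintro _ ⟨z, hz, rfl⟩
  exact (intValue_pos hA hz).le

lemma le_mul_arithMin [Nonempty ι] {A : Matrix ι ι ℝ} {b c : ℝ} (hb : 0 ≤ b)
    (h : ∀ x : ι → ℤ, x ≠ 0 → c ≤ b * intValue A x) : c ≤ b * arithMin A := by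
  rw [arithMin, ← smul_eq_mul, ← Real.sInf_smul_of_nonneg hb]
  refine le_csInf (.smul_set ⟨_, 1, one_ne_zero, rfl⟩) ?_
  rintro _ ⟨_, ⟨x, hx, rfl⟩, rfl⟩
  exact h x hx

/-- The matrix of the form `x ↦ A[Wx]` obtained from `A` by an integral linear substitution `W`. -/
noncomputable def pullback (A : Matrix ι ι ℝ) (W : Matrix ι κ ℤ) : Matrix κ κ ℝ :=
  (W.map (Int.cast : ℤ → ℝ))ᵀ * A * W.map (Int.cast : ℤ → ℝ)

lemma pullback_submatrix_one [DecidableEq ι] (A : Matrix ι ι ℝ) (f : κ → ι) :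
    pullback A ((1 : Matrix ι ι ℤ).submatrix id f) = A.submatrix f f := by
  ext a b
  simp [pullback, Matrix.mul_apply, Matrix.one_apply]

variable [Fintype κ]

lemma intValue_pullback (A : Matrix ι ι ℝ) (W : Matrix ι κ ℤ) (x : κ → ℤ) :
    intValue (pullback A W) x = intValue A (W *ᵥ x) := by
  have hcast : (fun i => ((W *ᵥ x) i : ℝ)) = W.map Int.cast *ᵥ fun i => (x i : ℝ) := by
    ext i; simp [mulVec, dotProduct]
  rw [intValue, intValue, pullback, hcast, ← mulVec_mulVec, ← mulVec_mulVec, dotProduct_mulVec,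
    vecMul_transpose]

lemma arithMin_le_arithMin_pullback [Nonempty κ] {A : Matrix ι ι ℝ} (hA : A.PosDef)
    {W : Matrix ι κ ℤ} (hW : Function.Injective W.mulVec) :
    arithMin A ≤ arithMin (pullback A W) := by
  rw [← one_mul (arithMin (pullback A W))]
  refine le_mul_arithMin zero_le_one fun x hx => ?_
  rw [one_mul, intValue_pullback]
  exact arithMin_le_intValue hA fun h => hx (hW (h.trans (mulVec_zero W).symm))

lemma arithMin_le_arithMin_submatrix [Nonempty κ] {A : Matrix ι ι ℝ} (hA : A.PosDef)
    {f : κ → ι} (hf : Function.Injective f) : arithMin A ≤ arithMin (A.submatrix f f) := by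
  classical
  rw [← pullback_submatrix_one]
  refine arithMin_le_arithMin_pullback hA fun x y hxy => ?_
  ext a
  simpa [mulVec, dotProduct, Matrix.one_apply, hf.eq_iff] using congrFun hxy (f a)

end ArithmeticMinimum

section UnimodularSubstitution

variable {ι : Type*} [Fintype ι] [DecidableEq ι]

lemma pullback_posDef_of_isUnit {A : Matrix ι ι ℝ} (hA : A.PosDef) {W : Matrix ι ι ℤ}
    (hW : IsUnit W) : (pullback A W).PosDef := by
  have hW' : IsUnit (W.map (Int.cast : ℤ → ℝ)) := hW.map (Int.castRingHom ℝ).mapMatrix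
  simpa only [pullback, conjTranspose_eq_transpose_of_trivial] using
    hA.conjTranspose_mul_mul_same (mulVec_injective_of_isUnit hW')

lemma det_pullback_of_isUnit (A : Matrix ι ι ℝ) {W : Matrix ι ι ℤ} (hW : IsUnit W) :
    (pullback A W).det = A.det := by
  have hdet : (W.map (Int.cast : ℤ → ℝ)).det = W.det := ((Int.castRingHom ℝ).map_det W).symm
  have hsq : (W.det : ℝ) ^ 2 = 1 := by
    exact_mod_cast Int.isUnit_sq ((isUnit_iff_isUnit_det W).1 hW)
  rw [pullback, det_mul, det_mul, det_transpose, hdet]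
  linear_combination A.det * hsq

lemma inv_pullback (A : Matrix ι ι ℝ) {U W : Matrix ι ι ℤ} (h : Uᵀ * W = 1) :
    (pullback A W)⁻¹ = pullback A⁻¹ U := by
  have hcast : (U.map (Int.cast : ℤ → ℝ))ᵀ * W.map (Int.cast : ℤ → ℝ) = 1 :=
    (map_mul (Int.castRingHom ℝ).mapMatrix Uᵀ W).symm.trans (by rw [h, map_one])
  have hinv : (W.map (Int.cast : ℤ → ℝ))⁻¹ = (U.map (Int.cast : ℤ → ℝ))ᵀ := inv_eq_left_inv hcast
  rw [pullback, pullback, Matrix.mul_inv_rev, Matrix.mul_inv_rev, ← transpose_nonsing_inv, hinv,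
    transpose_transpose, Matrix.mul_assoc]

lemma exists_units_eq_smul_mulVec_single {R : Type*} [CommRing R] [IsDomain R]
    [IsPrincipalIdealRing R] {y : ι → R} (hy : y ≠ 0) :
    ∃ (U : (Matrix ι ι R)ˣ) (j : ι) (c : R), y = c • U.val *ᵥ Pi.single j 1 := by
  obtain ⟨k, bM, bN, f, a, snf⟩ :=
    Submodule.smithNormalForm (Pi.basisFun R ι) (Submodule.span R {y})
  obtain rfl : k = 1 := by
    have hrank := (LinearEquiv.toSpanNonzeroSingleton R (ι → R) y hy).finrank_eq
    rwa [Module.finrank_self, Module.finrank_eq_card_basis bN, Fintype.card_fin, eq_comm] at hrank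
  have hy_eq := congrArg Subtype.val (bN.sum_repr ⟨y, Submodule.mem_span_singleton_self y⟩)
  simp only [Finset.univ_unique, Finset.sum_singleton, Submodule.coe_smul, snf, smul_smul] at hy_eq
  refine ⟨⟨(Pi.basisFun R ι).toMatrix bM, bM.toMatrix (Pi.basisFun R ι),
    Module.Basis.toMatrix_mul_toMatrix_flip _ _, Module.Basis.toMatrix_mul_toMatrix_flip _ _⟩,
    f default, bN.repr ⟨y, Submodule.mem_span_singleton_self y⟩ default * a default, ?_⟩
  rw [mulVec_single_one]
  exact hy_eq.symm

end UnimodularSubstitution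

section Minkowski

open MeasureTheory Module

variable {ι : Type*} [Fintype ι] [DecidableEq ι] [Nonempty ι]

/-- Minkowski's linear forms theorem: the convex body theorem for a cube and the lattice spanned by
the columns of `B`. -/
lemma exists_int_ne_zero_abs_mulVec_le {B : Matrix ι ι ℝ} (hB : B.det ≠ 0) {c : ℝ} (hc : 0 ≤ c)
    (hBc : |B.det| ≤ c ^ Fintype.card ι) :
    ∃ x : ι → ℤ, x ≠ 0 ∧ ∀ i, |(B *ᵥ fun j => (x j : ℝ)) i| ≤ c := by
  classical
  let b := basisOfPiSpaceOfLinearIndependent (linearIndependent_cols_of_det_ne_zero hB)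
  have hb : ⇑b = B.col := coe_basisOfPiSpaceOfLinearIndependent _
  have hvol : volume (ZSpan.fundamentalDomain b) * 2 ^ finrank ℝ (ι → ℝ) ≤
      volume (Metric.closedBall (0 : ι → ℝ) c) := by
    have hdet : (Matrix.of ⇑b).det = B.det := by rw [hb, ← det_transpose]; rfl
    rw [ZSpan.volume_fundamentalDomain, hdet, Real.volume_pi_closedBall _ hc,
      finrank_fintype_fun_eq_card, mul_pow, mul_comm, ENNReal.ofReal_mul (by positivity),
      ENNReal.ofReal_pow zero_le_two, ENNReal.ofReal_ofNat]
    gcongr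
  have : Countable (Submodule.span ℤ (Set.range b)).toAddSubgroup :=
    inferInstanceAs (Countable (Submodule.span ℤ (Set.range b)))
  have : DiscreteTopology (Submodule.span ℤ (Set.range b)).toAddSubgroup :=
    inferInstanceAs (DiscreteTopology (Submodule.span ℤ (Set.range b)))
  obtain ⟨⟨v, hv⟩, hv0, hvc⟩ := exists_ne_zero_mem_lattice_of_measure_mul_two_pow_le_measure
    (ZSpan.isAddFundamentalDomain' b volume) (fun v hv => by simpa using hv)
    (convex_closedBall 0 c) (isCompact_closedBall 0 c) hvol
  obtain ⟨x, rfl⟩ := (Submodule.mem_span_range_iff_exists_fun ℤ).1 hv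
  have hBx : ∑ j, x j • b j = B *ᵥ fun j => (x j : ℝ) := by
    ext i
    simp [hb, mulVec, dotProduct, mul_comm]
  refine ⟨x, ?_, fun i => ?_⟩
  · rintro rfl
    exact hv0 (by simp)
  · rw [← hBx, ← Real.norm_eq_abs]
    exact (norm_le_pi_norm _ i).trans (mem_closedBall_zero_iff.1 hvc)

open scoped MatrixOrder in
lemma arithMin_le_card_mul_det_rpow {A : Matrix ι ι ℝ} (hA : A.PosDef) :
    arithMin A ≤ Fintype.card ι * A.det ^ ((1 : ℝ) / Fintype.card ι) := by
  obtain ⟨B, hAB⟩ := CStarAlgebra.nonneg_iff_eq_star_mul_self.1 hA.posSemidef.nonneg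
  rw [star_eq_conjTranspose, conjTranspose_eq_transpose_of_trivial] at hAB
  have hdet : A.det = |B.det| ^ 2 := by rw [hAB, det_mul, det_transpose, sq_abs, sq]
  have hB : B.det ≠ 0 := fun h => hA.det_pos.ne' (by simp [hdet, h])
  set c : ℝ := |B.det| ^ ((1 : ℝ) / Fintype.card ι) with hc
  have hc_sq : A.det ^ ((1 : ℝ) / Fintype.card ι) = c ^ 2 := by
    rw [hdet, Real.rpow_pow_comm (abs_nonneg _)]
  have hBc : |B.det| ≤ c ^ Fintype.card ι := by
    rw [hc, one_div, Real.rpow_inv_natCast_pow (abs_nonneg _) Fintype.card_ne_zero]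
  obtain ⟨x, hx, hxc⟩ := exists_int_ne_zero_abs_mulVec_le hB (by positivity) hBc
  have hval : intValue A x = ∑ i, (B *ᵥ fun j => (x j : ℝ)) i ^ 2 := by
    rw [intValue, hAB, ← mulVec_mulVec, dotProduct_mulVec, vecMul_transpose]
    simp only [dotProduct, sq]
  calc arithMin A ≤ ∑ i, (B *ᵥ fun j => (x j : ℝ)) i ^ 2 := hval ▸ arithMin_le_intValue hA hx
    _ ≤ ∑ _i : ι, c ^ 2 := Finset.sum_le_sum fun i _ => sq_le_sq' (abs_le.1 (hxc i)).1
        (abs_le.1 (hxc i)).2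
    _ = Fintype.card ι * A.det ^ ((1 : ℝ) / Fintype.card ι) := by
        rw [hc_sq, Finset.sum_const, Finset.card_univ, nsmul_eq_mul]

end Minkowski

section HermiteInvariant

variable {n : ℕ}

/-- The Hermite invariant of the quadratic form with matrix `A`: its arithmetical minimum,
normalized so as to be invariant under scaling of `A`. -/
noncomputable def hermiteInvariant (A : Matrix (Fin n) (Fin n) ℝ) : ℝ :=
  arithMin A / A.det ^ ((1 : ℝ) / n)

lemma hermiteConstant_eq_sSup_image (n : ℕ) :
    hermiteConstant n = sSup (hermiteInvariant '' {A : Matrix (Fin n) (Fin n) ℝ | A.PosDef}) := by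
  refine congrArg sSup (Set.ext fun r => exists_congr fun A => and_congr_right fun _ => ?_)
  exact eq_comm

lemma hermiteInvariant_nonneg {A : Matrix (Fin n) (Fin n) ℝ} (hA : A.PosDef) :
    0 ≤ hermiteInvariant A :=
  div_nonneg (arithMin_nonneg hA) (Real.rpow_nonneg hA.det_pos.le _)

lemma hermiteConstant_nonneg (n : ℕ) : 0 ≤ hermiteConstant n := by
  rw [hermiteConstant_eq_sSup_image]
  exact Real.sSup_nonneg (Set.forall_mem_image.2 fun _ => hermiteInvariant_nonneg)

lemma hermiteInvariant_le_natCast [NeZero n] {A : Matrix (Fin n) (Fin n) ℝ} (hA : A.PosDef) :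
    hermiteInvariant A ≤ n := by
  rw [hermiteInvariant, div_le_iff₀ (Real.rpow_pos_of_pos hA.det_pos _)]
  simpa only [Fintype.card_fin] using arithMin_le_card_mul_det_rpow hA

lemma hermiteInvariant_le_hermiteConstant [NeZero n] {A : Matrix (Fin n) (Fin n) ℝ}
    (hA : A.PosDef) : hermiteInvariant A ≤ hermiteConstant n := by
  rw [hermiteConstant_eq_sSup_image]
  exact le_csSup ⟨n, Set.forall_mem_image.2 fun _ => hermiteInvariant_le_natCast⟩
    (Set.mem_image_of_mem _ hA)

lemma hermiteConstant_pow_le {k : ℕ} (hk : k ≠ 0) {c : ℝ}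
    (h : ∀ A : Matrix (Fin n) (Fin n) ℝ, A.PosDef → hermiteInvariant A ^ k ≤ c) :
    hermiteConstant n ^ k ≤ c := by
  have hc : 0 ≤ c := (pow_nonneg (hermiteInvariant_nonneg .one) k).trans (h 1 .one)
  rw [← Real.rpow_inv_natCast_pow hc hk]
  refine pow_le_pow_left₀ (hermiteConstant_nonneg n) ?_ k
  rw [hermiteConstant_eq_sSup_image]
  refine Real.sSup_le (Set.forall_mem_image.2 fun A hA => ?_) (by positivity)
  refine le_of_pow_le_pow_left₀ hk (by positivity) ?_
  rw [Real.rpow_inv_natCast_pow hc hk]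
  exact h A hA

lemma arithMin_pow_le_hermiteConstant_pow_mul_det [NeZero n] {A : Matrix (Fin n) (Fin n) ℝ}
    (hA : A.PosDef) : arithMin A ^ n ≤ hermiteConstant n ^ n * A.det := by
  have hle : arithMin A ≤ hermiteConstant n * A.det ^ ((1 : ℝ) / n) :=
    (div_le_iff₀ (Real.rpow_pos_of_pos hA.det_pos _)).1 (hermiteInvariant_le_hermiteConstant hA)
  calc arithMin A ^ n ≤ (hermiteConstant n * A.det ^ ((1 : ℝ) / n)) ^ n :=
        pow_le_pow_left₀ (arithMin_nonneg hA) hle n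
    _ = hermiteConstant n ^ n * A.det := by
        rw [mul_pow, one_div, Real.rpow_inv_natCast_pow hA.det_pos.le (NeZero.ne n)]

end HermiteInvariant

section Duality

variable {m : ℕ}

lemma det_submatrix_succAbove {K : Type*} [Field K] {A : Matrix (Fin (m + 1)) (Fin (m + 1)) K}
    (hA : A.det ≠ 0) (j : Fin (m + 1)) :
    (A.submatrix j.succAbove j.succAbove).det = A.det * A⁻¹ j j := by
  rw [inv_def, Matrix.smul_apply, smul_eq_mul, Ring.inverse_eq_inv', mul_inv_cancel_left₀ hA,
    adjugate_fin_succ_eq_det_submatrix, Even.neg_one_pow ⟨_, rfl⟩, one_mul]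

variable [NeZero m] {A : Matrix (Fin (m + 1)) (Fin (m + 1)) ℝ}

lemma arithMin_pow_le_mul_inv_apply (hA : A.PosDef) (j : Fin (m + 1)) :
    arithMin A ^ m ≤ hermiteConstant m ^ m * A.det * A⁻¹ j j := by
  have hj : Function.Injective j.succAbove := Fin.succAbove_right_injective
  calc arithMin A ^ m
      ≤ arithMin (A.submatrix j.succAbove j.succAbove) ^ m :=
        pow_le_pow_left₀ (arithMin_nonneg hA) (arithMin_le_arithMin_submatrix hA hj) m
    _ ≤ hermiteConstant m ^ m * (A.submatrix j.succAbove j.succAbove).det :=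
        arithMin_pow_le_hermiteConstant_pow_mul_det (hA.submatrix hj)
    _ = hermiteConstant m ^ m * A.det * A⁻¹ j j := by
        rw [det_submatrix_succAbove hA.det_pos.ne', mul_assoc]

lemma arithMin_pow_le_mul_intValue_inv (hA : A.PosDef) {y : Fin (m + 1) → ℤ} (hy : y ≠ 0) :
    arithMin A ^ m ≤ hermiteConstant m ^ m * A.det * intValue A⁻¹ y := by
  obtain ⟨U, j, c, rfl⟩ := exists_units_eq_smul_mulVec_single hy
  -- In the coordinates given by `W`, the dual vector `U eⱼ` becomes `eⱼ`.
  set W : Matrix (Fin (m + 1)) (Fin (m + 1)) ℤ := (U⁻¹).valᵀ with hW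
  have hUW : U.valᵀ * W = 1 := by rw [hW, ← transpose_mul, U.inv_mul, transpose_one]
  have hW_unit : IsUnit W := (isUnit_transpose _).2 (U⁻¹).isUnit
  have hinv : (pullback A W)⁻¹ j j = intValue A⁻¹ (U.val *ᵥ Pi.single j 1) := by
    rw [inv_pullback A hUW, ← intValue_pullback, intValue_single]
  calc arithMin A ^ m
      ≤ arithMin (pullback A W) ^ m := pow_le_pow_left₀ (arithMin_nonneg hA)
        (arithMin_le_arithMin_pullback hA (mulVec_injective_of_isUnit hW_unit)) m
    _ ≤ hermiteConstant m ^ m * A.det * intValue A⁻¹ (U.val *ᵥ Pi.single j 1) := by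
        rw [← hinv, ← det_pullback_of_isUnit A hW_unit]
        exact arithMin_pow_le_mul_inv_apply (pullback_posDef_of_isUnit hA hW_unit) j
    _ ≤ hermiteConstant m ^ m * A.det * intValue A⁻¹ (c • U.val *ᵥ Pi.single j 1) :=
        mul_le_mul_of_nonneg_left (intValue_le_intValue_smul hA.inv hy)
          (mul_nonneg (pow_nonneg (hermiteConstant_nonneg m) m) hA.det_pos.le)

lemma arithMin_pow_le_mul_arithMin_inv (hA : A.PosDef) :
    arithMin A ^ m ≤ hermiteConstant m ^ m * A.det * arithMin A⁻¹ :=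
  le_mul_arithMin (mul_nonneg (pow_nonneg (hermiteConstant_nonneg m) m) hA.det_pos.le)
    fun _ => arithMin_pow_le_mul_intValue_inv hA

lemma hermiteInvariant_pow_le_mul_hermiteInvariant_inv (hA : A.PosDef) :
    hermiteInvariant A ^ m ≤ hermiteConstant m ^ m * hermiteInvariant A⁻¹ := by
  set t : ℝ := A.det ^ ((1 : ℝ) / (m + 1 : ℕ)) with ht
  have ht_pos : 0 < t := Real.rpow_pos_of_pos hA.det_pos _
  have ht_pow : t ^ (m + 1) = A.det := by
    rw [ht, one_div, Real.rpow_inv_natCast_pow hA.det_pos.le m.succ_ne_zero]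
  have ht_inv : A⁻¹.det ^ ((1 : ℝ) / (m + 1 : ℕ)) = t⁻¹ := by
    rw [det_nonsing_inv, Ring.inverse_eq_inv', Real.inv_rpow hA.det_pos.le]
  rw [hermiteInvariant, hermiteInvariant, ← ht, ht_inv, div_inv_eq_mul, div_pow,
    div_le_iff₀ (by positivity)]
  calc arithMin A ^ m ≤ hermiteConstant m ^ m * t ^ (m + 1) * arithMin A⁻¹ :=
        ht_pow ▸ arithMin_pow_le_mul_arithMin_inv hA
    _ = hermiteConstant m ^ m * (arithMin A⁻¹ * t) * t ^ m := by ring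

lemma hermiteConstant_succ_pow_le (m : ℕ) [NeZero m] :
    hermiteConstant (m + 1) ^ m ≤ hermiteConstant m ^ m * hermiteConstant (m + 1) :=
  hermiteConstant_pow_le (NeZero.ne m) fun _ hA =>
    (hermiteInvariant_pow_le_mul_hermiteInvariant_inv hA).trans <|
      mul_le_mul_of_nonneg_left (hermiteInvariant_le_hermiteConstant hA.inv)
        (pow_nonneg (hermiteConstant_nonneg m) m)

end Duality

theorem mordell_inequality (n : ℕ) (hn : 3 ≤ n) :
    hermiteConstant n ^ (n - 2) ≤ hermiteConstant (n - 1) ^ (n - 1) := by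
  obtain ⟨k, rfl⟩ : ∃ k, n = k + 3 := ⟨n - 3, by omega⟩
  change hermiteConstant (k + 3) ^ (k + 1) ≤ hermiteConstant (k + 2) ^ (k + 2)
  have hbound := hermiteConstant_succ_pow_le (k + 2)
  rcases (hermiteConstant_nonneg (k + 3)).eq_or_lt with hzero | hpos
  · rw [← hzero, zero_pow k.succ_ne_zero]
    exact pow_nonneg (hermiteConstant_nonneg _) _
  · rw [pow_succ] at hbound
    exact le_of_mul_le_mul_right hbound hpos
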